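/- Let n ≥ 2. For any two transpositions σ = (i j) and ρ = (k l) in S_n with {i,j} ∩ {k,l} = ∅ and any x ∈ S_n, one has c(σ, x) + c(σ, ρ·x) + c(ρ, x) + c(ρ, σ·x) = 1 in Z/2Z. (This is the algebraic form of the square rule (Sq) for the induced sign assignment in the disjoint-support case.) -/

import Mathlib

open Equiv
open scoped Classical

/-- Generator `z` as an element of the free group. -/
def zF (n : ℕ) : FreeGroup (Fin (n-1) ⊕ Unit) := FreeGroup.of (Sum.inr ())

/-- Generator `τ̃ᵢ` as an element of the free group. -/
def tF (n : ℕ) (i : Fin (n-1)) : FreeGroup (Fin (n-1) ⊕ Unit) := FreeGroup.of (Sum.inl i)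

/-- Relations of the spin extension of the symmetric group. -/
def spinRels (n : ℕ) : Set (FreeGroup (Fin (n-1) ⊕ Unit)) :=
  {zF n * zF n} ∪
  {w | ∃ i : Fin (n-1), w = zF n * tF n i * (tF n i * zF n)⁻¹} ∪
  {w | ∃ i : Fin (n-1), w = tF n i * tF n i * (zF n)⁻¹} ∪
  {w | ∃ i j : Fin (n-1), 1 < |(i : ℤ) - (j : ℤ)| ∧ w = tF n i * tF n j * (zF n * tF n j * tF n i)⁻¹} ∪
  {w | ∃ i j : Fin (n-1), (j : ℕ) = (i : ℕ) + 1 ∧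
        w = tF n i * tF n j * tF n i * (tF n j * tF n i * tF n j)⁻¹}

/-- The spin extension `S̃ₙ` of the symmetric group, as a presented group. -/
abbrev SpinSym (n : ℕ) := PresentedGroup (spinRels n)

/-- The central element `z` of `S̃ₙ`. -/
def zt (n : ℕ) : SpinSym n := PresentedGroup.of (Sum.inr ())

/-- The generator `τ̃ᵢ` of `S̃ₙ`. -/
def tt (n : ℕ) (i : Fin (n-1)) : SpinSym n := PresentedGroup.of (Sum.inl i)

/-- `i` as an element of `Fin n`. -/
def finL (n : ℕ) (i : Fin (n-1)) : Fin n := ⟨i, by have := i.2; omega⟩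

/-- `i+1` as an element of `Fin n`. -/
def finR (n : ℕ) (i : Fin (n-1)) : Fin n := ⟨(i : ℕ) + 1, by have := i.2; omega⟩

/-- `τ̃ₖ` for a natural number index, `1` out of range. -/
def ttN (n : ℕ) (k : ℕ) : SpinSym n := if h : k < n - 1 then tt n ⟨k, h⟩ else 1

/-- For `i ≤ j`, the word `τ̃ᵢ·τ̃ᵢ₊₁⋯τ̃ⱼ₋₂·τ̃ⱼ₋₁·τ̃ⱼ₋₂⋯τ̃ᵢ₊₁·τ̃ᵢ` (equal to `1` when `i = j`). -/
def ttilCore (n i j : ℕ) : SpinSym n :=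
  (((List.range' i (j - i)) ++ (List.range' i (j - 1 - i)).reverse).map (ttN n)).prod

/-- The lifted transpositions `τ̃_{i,j}`, with `τ̃_{j,i} = z·τ̃_{i,j}` for `i < j`,
and `τ̃_{k,k} = 1`. -/
def ttil (n i j : ℕ) : SpinSym n := if j < i then zt n * ttilCore n j i else ttilCore n i j

/-- `i` is the sequence of indices of a factorization of `x` as a product of
transpositions `t_{i_0,0} ⋯ t_{i_{n-1},n-1}` with `i_k ≤ k`. -/
def IsFactorization (n : ℕ) (x : Equiv.Perm (Fin n)) (i : Fin n → Fin n) : Prop :=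
  (∀ k, i k ≤ k) ∧ x = ((List.finRange n).map (fun k => Equiv.swap (i k) k)).prod

/-- The section `s : Sₙ → S̃ₙ`, defined from the unique factorization
`x = t_{i_0,0} ⋯ t_{i_{n-1},n-1}` by `s x = τ̃_{i_0,0} ⋯ τ̃_{i_{n-1},n-1}`. -/
noncomputable def sec (n : ℕ) (x : Equiv.Perm (Fin n)) : SpinSym n :=
  if h : ∃ i, IsFactorization n x i then
    ((List.finRange n).map (fun k => ttil n (h.choose k).val k.val)).prod
  else 1

/-- The `2`-cocycle `c : Sₙ × Sₙ → ℤ/2ℤ` defined by `s(x)·s(y) = z^{c(x,y)}·s(x·y)`. -/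
noncomputable def coc (n : ℕ) (x y : Equiv.Perm (Fin n)) : ZMod 2 :=
  if sec n x * sec n y = sec n (x * y) then 0 else 1

/-!
The square rule combines the cocycle identity `c(p, q) + c(pq, x) = c(q, x) + c(p, qx)` with
`c(σ, ρ) + c(ρ, σ) = 1` for disjoint transpositions `σ` and `ρ`. The latter says that the sections
`s σ` and `s ρ` anticommute, `s σ * s ρ = z * (s ρ * s σ)`, as any lifts of `σ` and `ρ` do.

Both facts rest on an embedding of `S̃ₙ` into the product of `Sₙ` with the units of a Clifford
algebra, where `τ̃ᵢ` goes to the adjacent transposition on one side and to the root `eᵢ - eᵢ₊₁` on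
the other. The projection to `Sₙ` has kernel exactly `{1, z}`, because modulo `z` the relations are
the Coxeter relations of `Sₙ`; and `z ≠ 1`, because the Clifford algebra sends it to `-1`.
Anticommutation can then be checked in each factor: disjoint transpositions commute, and orthogonal
vectors anticommute.
-/

section Coxeter

/-- The Coxeter relations of type `A` for the elements `t 0, …, t (N - 1)` of a group; the values
of `t` from `N` on are irrelevant. -/
structure IsCoxeterTypeA {G : Type*} [Group G] (t : ℕ → G) (N : ℕ) : Prop where
  mul_self : ∀ {a}, a < N → t a * t a = 1
  commute : ∀ {a b}, a + 1 < b → b < N → Commute (t a) (t b)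
  braid : ∀ {a}, a + 1 < N → t a * t (a + 1) * t a = t (a + 1) * t a * t (a + 1)

/-- The ascending products `t 0 * t 1 * ⋯ * t (k - 1)`. In type `A` they represent the right cosets
of the parabolic subgroup that omits the generator `t 0`. -/
def ascProd {G : Type*} [Group G] (t : ℕ → G) (k : ℕ) : G := ((List.range k).map t).prod

variable {G : Type*} [Group G] {t : ℕ → G} {N : ℕ}

@[simp]
lemma ascProd_zero (t : ℕ → G) : ascProd t 0 = 1 := rfl

lemma ascProd_succ (t : ℕ → G) (k : ℕ) : ascProd t (k + 1) = ascProd t k * t k :=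
  List.prod_range_succ t k

namespace IsCoxeterTypeA

lemma shift (h : IsCoxeterTypeA t (N + 1)) : IsCoxeterTypeA (fun a => t (a + 1)) N where
  mul_self ha := h.mul_self (by omega)
  commute hab hb := h.commute (by omega) (by omega)
  braid ha := h.braid (by omega)

lemma commute_ascProd (h : IsCoxeterTypeA t N) {k a : ℕ} (hka : k < a) (ha : a < N) :
    Commute (ascProd t k) (t a) := by
  induction k with
  | zero => exact Commute.one_left _
  | succ k ih =>
    rw [ascProd_succ]
    exact (ih (by omega)).mul_left (h.commute hka ha)

lemma ascProd_mul (h : IsCoxeterTypeA t N) {a k : ℕ} (hak : a + 2 ≤ k) (hk : k ≤ N) :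
    ascProd t k * t a = t (a + 1) * ascProd t k := by
  induction k, hak using Nat.le_induction with
  | base =>
    calc ascProd t (a + 2) * t a
        = ascProd t a * (t a * t (a + 1) * t a) := by simp only [ascProd_succ, mul_assoc]
      _ = ascProd t a * t (a + 1) * (t a * t (a + 1)) := by
          rw [h.braid (by omega)]; simp only [mul_assoc]
      _ = t (a + 1) * ascProd t (a + 2) := by
          rw [(h.commute_ascProd (Nat.lt_succ_self a) (by omega)).eq]
          simp only [ascProd_succ, mul_assoc]
  | succ k hak ih =>
    rw [ascProd_succ, mul_assoc, ← (h.commute (by omega) (by omega) : Commute (t a) (t k)).eq,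
      ← mul_assoc, ih (by omega), mul_assoc]

lemma exists_ascProd_mul_eq (h : IsCoxeterTypeA t (N + 1)) {k a : ℕ} (hk : k ≤ N + 1)
    (ha : a < N + 1) : ∃ l ≤ N + 1,
      ∃ g ∈ Subgroup.closure ((fun b => t (b + 1)) '' Set.Iio N),
        ascProd t k * t a = g * ascProd t l := by
  have mem_closure {b : ℕ} (hb : b < N) :
      t (b + 1) ∈ Subgroup.closure ((fun b => t (b + 1)) '' Set.Iio N) :=
    Subgroup.subset_closure ⟨b, hb, rfl⟩
  rcases lt_trichotomy a k with hak | rfl | hka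
  · rcases (Nat.succ_le_of_lt hak).eq_or_lt with rfl | hak'
    · exact ⟨a, by omega, 1, one_mem _,
        by rw [ascProd_succ, mul_assoc, h.mul_self ha, mul_one, one_mul]⟩
    · exact ⟨k, hk, _, mem_closure (by omega), h.ascProd_mul hak' hk⟩
  · exact ⟨a + 1, by omega, 1, one_mem _, by rw [ascProd_succ, one_mul]⟩
  · obtain ⟨b, rfl⟩ := Nat.exists_eq_succ_of_ne_zero (Nat.ne_zero_of_lt hka)
    exact ⟨k, hk, _, mem_closure (by omega), h.commute_ascProd hka ha⟩

lemma exists_eq_mul_ascProd (h : IsCoxeterTypeA t (N + 1)) {g : G}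
    (hg : g ∈ Subgroup.closure (t '' Set.Iio (N + 1))) : ∃ k ≤ N + 1,
      ∃ g' ∈ Subgroup.closure ((fun b => t (b + 1)) '' Set.Iio N), g = g' * ascProd t k := by
  have mul_generator {x : G} {a : ℕ} (ha : a < N + 1)
      (hx : ∃ k ≤ N + 1, ∃ g ∈ Subgroup.closure ((fun b => t (b + 1)) '' Set.Iio N),
        x = g * ascProd t k) :
      ∃ k ≤ N + 1, ∃ g ∈ Subgroup.closure ((fun b => t (b + 1)) '' Set.Iio N),
        x * t a = g * ascProd t k := by
    obtain ⟨k, hk, g, hg, rfl⟩ := hx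
    obtain ⟨l, hl, g', hg', heq⟩ := h.exists_ascProd_mul_eq hk ha
    exact ⟨l, hl, g * g', mul_mem hg hg', by rw [mul_assoc, heq, mul_assoc]⟩
  induction hg using Subgroup.closure_induction_right with
  | one => exact ⟨0, Nat.zero_le _, 1, one_mem _, by rw [ascProd_zero, mul_one]⟩
  | mul_right x _ y hy ih =>
    obtain ⟨a, ha, rfl⟩ := hy
    exact mul_generator ha ih
  | mul_inv_cancel x _ y hy ih =>
    obtain ⟨a, ha, rfl⟩ := hy
    rw [inv_eq_of_mul_eq_one_left (h.mul_self ha)]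
    exact mul_generator ha ih

section Action

variable {α : Type*} [DecidableEq α] {φ : G →* Perm α} {e : ℕ → α}

lemma map_ascProd_apply (hφ : ∀ a < N, φ (t a) = swap (e a) (e (a + 1))) {k : ℕ} (hk : k ≤ N) :
    φ (ascProd t k) (e k) = e 0 := by
  induction k with
  | zero => simp
  | succ k ih =>
    rw [ascProd_succ, map_mul, Perm.mul_apply, hφ k (by omega), swap_apply_right, ih (by omega)]

lemma map_apply_zero_of_mem_closure (he : Set.InjOn e (Set.Iic (N + 1)))
    (hφ : ∀ a < N + 1, φ (t a) = swap (e a) (e (a + 1))) {g : G}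
    (hg : g ∈ Subgroup.closure ((fun b => t (b + 1)) '' Set.Iio N)) : φ g (e 0) = e 0 := by
  suffices Subgroup.closure ((fun b => t (b + 1)) '' Set.Iio N) ≤
      (MulAction.stabilizer (Perm α) (e 0)).comap φ from this hg
  rw [Subgroup.closure_le]
  rintro _ ⟨b, hb : b < N, rfl⟩
  have ne_zero {c : ℕ} (hc : c < N + 1) : e 0 ≠ e (c + 1) := fun h0 =>
    absurd (he (Set.mem_Iic.2 (by omega)) (Set.mem_Iic.2 (by omega)) h0) (by omega)
  change φ (t (b + 1)) (e 0) = e 0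
  rw [hφ _ (by omega)]
  exact swap_apply_of_ne_of_ne (ne_zero (by omega)) (ne_zero (by omega))

theorem eq_one_of_map_eq_one (h : IsCoxeterTypeA t N) (he : Set.InjOn e (Set.Iic N))
    (hφ : ∀ a < N, φ (t a) = swap (e a) (e (a + 1))) {g : G}
    (hg : g ∈ Subgroup.closure (t '' Set.Iio N)) (hg1 : φ g = 1) : g = 1 := by
  induction N generalizing t e g with
  | zero => simpa using hg
  | succ N ih =>
    obtain ⟨k, hk, g, hg', rfl⟩ := h.exists_eq_mul_ascProd hg
    have hek : e 0 = e k := by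
      rw [← map_apply_zero_of_mem_closure he hφ hg', ← map_ascProd_apply hφ hk,
        ← Perm.mul_apply, ← map_mul, hg1, Perm.one_apply]
    obtain rfl : 0 = k := he (Set.mem_Iic.2 (Nat.zero_le _)) hk hek
    rw [ascProd_zero, mul_one] at hg1 ⊢
    refine ih h.shift (e := fun a => e (a + 1)) (fun a ha b hb hab => ?_)
      (fun a ha => hφ (a + 1) (by omega)) hg' hg1
    rw [Set.mem_Iic] at ha hb
    exact Nat.succ_injective
      (he (Set.mem_Iic.2 (by omega)) (Set.mem_Iic.2 (by omega)) hab)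

end Action

end IsCoxeterTypeA

end Coxeter

section SpinRelations

variable {n : ℕ}

lemma zt_mul_zt : zt n * zt n = 1 :=
  PresentedGroup.one_of_mem (Or.inl <| Or.inl <| Or.inl <| Or.inl rfl)

lemma zt_mul_tt (i : Fin (n - 1)) : zt n * tt n i = tt n i * zt n :=
  PresentedGroup.mk_eq_mk_of_mul_inv_mem (Or.inl <| Or.inl <| Or.inl <| Or.inr ⟨i, rfl⟩)

lemma tt_mul_tt (i : Fin (n - 1)) : tt n i * tt n i = zt n :=
  PresentedGroup.mk_eq_mk_of_mul_inv_mem (Or.inl <| Or.inl <| Or.inr ⟨i, rfl⟩)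

lemma tt_mul_tt_of_lt {i j : Fin (n - 1)} (h : (i : ℕ) + 1 < j) :
    tt n i * tt n j = zt n * tt n j * tt n i :=
  PresentedGroup.mk_eq_mk_of_mul_inv_mem
    (Or.inl <| Or.inr ⟨i, j, lt_abs.2 (by omega), rfl⟩)

lemma tt_braid {i j : Fin (n - 1)} (h : (j : ℕ) = i + 1) :
    tt n i * tt n j * tt n i = tt n j * tt n i * tt n j :=
  PresentedGroup.mk_eq_mk_of_mul_inv_mem (Or.inr ⟨i, j, h, rfl⟩)

lemma zt_mem_center : zt n ∈ Subgroup.center (SpinSym n) := by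
  suffices ∀ g, g ∈ Subgroup.centralizer {zt n} from Subgroup.mem_center_iff.2 fun g =>
    Subgroup.mem_centralizer_singleton_iff.1 (this g)
  refine PresentedGroup.generated_by _ _ ?_
  rintro (i | ⟨⟩) <;> rw [Subgroup.mem_centralizer_singleton_iff]
  · exact (zt_mul_tt i).symm
  · rfl

lemma commute_zt (g : SpinSym n) : Commute g (zt n) := Subgroup.mem_center_iff.1 zt_mem_center g

lemma eq_one_or_eq_zt_of_mem_zpowers {g : SpinSym n} (hg : g ∈ Subgroup.zpowers (zt n)) :
    g = 1 ∨ g = zt n := by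
  obtain ⟨m, rfl⟩ := hg
  have hz : zt n ^ (2 : ℤ) = 1 := by rw [zpow_two, zt_mul_zt]
  rcases Int.even_or_odd' m with ⟨c, rfl | rfl⟩
  · exact Or.inl (by simp only [zpow_mul, hz, one_zpow])
  · exact Or.inr (by simp only [zpow_add, zpow_mul, hz, one_zpow, one_mul, zpow_one])

lemma ttN_of_lt {a : ℕ} (h : a < n - 1) : ttN n a = tt n ⟨a, h⟩ := dif_pos h

lemma ttil_self (a : ℕ) : ttil n a a = 1 := by simp [ttil, ttilCore]

lemma ttilCore_succ (a : ℕ) : ttilCore n a (a + 1) = ttN n a := by simp [ttilCore]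

lemma ttilCore_eq_mul_mul {a b : ℕ} (h : a + 1 < b) :
    ttilCore n a b = ttN n a * ttilCore n (a + 1) b * ttN n a := by
  rw [ttilCore, ttilCore, show b - a = b - (a + 1) + 1 by omega,
    show b - 1 - a = b - 1 - (a + 1) + 1 by omega, List.range'_succ, List.range'_succ]
  simp only [List.reverse_cons, List.cons_append, List.map_cons, List.map_append, List.map_nil,
    List.prod_cons, List.prod_append, List.prod_nil, mul_one, mul_assoc]

lemma finL_ne_finR (i : Fin (n - 1)) : finL n i ≠ finR n i := by
  simp [finL, finR, Fin.ext_iff]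

lemma finL_ne_finR_of_lt {i j : Fin (n - 1)} (h : i < j) : finL n i ≠ finR n j := by
  simp only [finL, finR, ne_eq, Fin.mk.injEq]
  omega

end SpinRelations

/-- Elements `r a b` of a monoid that satisfy the relations between the lifted transpositions
`τ̃_{a,b}`, with `w` in the role of `z`. Nothing is asked of the diagonal values `r a a`. -/
structure IsSpinSystem {α M : Type*} [Monoid M] (w : M) (r : α → α → M) : Prop where
  sq_central : w * w = 1
  mul_self : ∀ {a b}, a ≠ b → r a b * r a b = w
  swap : ∀ {a b}, a ≠ b → r b a = w * r a b
  anticommute : ∀ {a b c d}, a ≠ b → c ≠ d → a ≠ c → a ≠ d → b ≠ c → b ≠ d →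
    r a b * r c d = w * r c d * r a b
  conj : ∀ {a b c}, a ≠ b → a ≠ c → b ≠ c → r a b * r b c * r a b = r a c

namespace IsSpinSystem

section Basic

variable {α M : Type*} [Monoid M] {w : M} {r : α → α → M} {a b c : α}

lemma commute (h : IsSpinSystem w r) (hab : a ≠ b) : Commute w (r a b) := by
  rw [← h.mul_self hab]
  exact (Commute.refl _).mul_left (Commute.refl _)

lemma braid (h : IsSpinSystem w r) (hab : a ≠ b) (hac : a ≠ c) (hbc : b ≠ c) :
    r a b * r b c * r a b = r b c * r a b * r b c :=
  calc r a b * r b c * r a b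
      = w * r c a := by rw [h.conj hab hac hbc, ← h.swap hac.symm]
    _ = w * (r c b * r b a * r c b) := by rw [h.conj hbc.symm hac.symm hab.symm]
    _ = w * w * w * w * (r b c * r a b * r b c) := by
        rw [h.swap hbc, h.swap hab]
        simp only [mul_assoc, (h.commute hbc).symm.left_comm, (h.commute hab).symm.left_comm]
    _ = r b c * r a b * r b c := by simp only [h.sq_central, one_mul]

/-- The off-diagonal elements of a spin system as units. -/
def unit (h : IsSpinSystem w r) (hab : a ≠ b) : Mˣ where
  val := r a b
  inv := w * r a b
  val_inv := by rw [(h.commute hab).eq, ← mul_assoc, h.mul_self hab, h.sq_central]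
  inv_val := by rw [mul_assoc, h.mul_self hab, h.sq_central]

end Basic

section Lift

variable {n : ℕ} {M : Type*} [Monoid M] {w : M} {r : Fin n → Fin n → M}

/-- The images of the generators under `IsSpinSystem.lift`, as units of `M`. -/
def liftGen (h : IsSpinSystem w r) : Fin (n - 1) ⊕ Unit → Mˣ :=
  Sum.elim (fun i => h.unit (finL_ne_finR i)) fun _ => ⟨w, w, h.sq_central, h.sq_central⟩

lemma lift_liftGen_of_mem_spinRels (h : IsSpinSystem w r) :
    ∀ ρ ∈ spinRels n, FreeGroup.lift h.liftGen ρ = 1 := by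
  rintro _ ((((rfl | ⟨i, rfl⟩) | ⟨i, rfl⟩) | ⟨i, j, hij, rfl⟩) | ⟨i, j, hij, rfl⟩) <;>
    simp only [zF, tF, map_mul, map_inv, FreeGroup.lift_apply_of, liftGen, Sum.elim_inl,
      Sum.elim_inr, mul_inv_eq_one] <;>
    refine Units.ext ?_
  · exact h.sq_central
  · exact h.commute (finL_ne_finR i)
  · exact h.mul_self (finL_ne_finR i)
  · rw [lt_abs] at hij
    refine h.anticommute (finL_ne_finR i) (finL_ne_finR j) ?_ ?_ ?_ ?_ <;>
      simp only [finL, finR, ne_eq, Fin.mk.injEq] <;> omega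
  · have heq : finL n j = finR n i := Fin.ext hij
    have hj : finR n i ≠ finR n j := heq ▸ finL_ne_finR j
    simpa [unit, heq] using h.braid (finL_ne_finR i)
      (finL_ne_finR_of_lt (Fin.lt_def.2 (by omega))) hj

/-- The homomorphism from `S̃ₙ` determined by a spin system on `Fin n`: it sends `z` to `w` and
`τ̃_{a,b}` to `r a b`. -/
def lift (h : IsSpinSystem w r) : SpinSym n →* M :=
  (Units.coeHom M).comp (PresentedGroup.toGroup h.lift_liftGen_of_mem_spinRels)

lemma lift_zt (h : IsSpinSystem w r) : h.lift (zt n) = w :=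
  congrArg Units.val (PresentedGroup.toGroup.of h.lift_liftGen_of_mem_spinRels)

lemma lift_ttN (h : IsSpinSystem w r) {a : ℕ} (ha : a + 1 < n) :
    h.lift (ttN n a) = r ⟨a, by omega⟩ ⟨a + 1, ha⟩ := by
  rw [ttN_of_lt (by omega)]
  exact congrArg Units.val (PresentedGroup.toGroup.of h.lift_liftGen_of_mem_spinRels)

lemma lift_ttilCore (h : IsSpinSystem w r) {a b : ℕ} (hab : a < b) (hb : b < n) :
    h.lift (ttilCore n a b) = r ⟨a, hab.trans hb⟩ ⟨b, hb⟩ := by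
  rcases (Nat.succ_le_of_lt hab).eq_or_lt with rfl | hab'
  · rw [ttilCore_succ, h.lift_ttN]
  · rw [ttilCore_eq_mul_mul hab', map_mul, map_mul, h.lift_ttN (by omega),
      h.lift_ttilCore hab' hb, h.conj] <;>
      simp only [ne_eq, Fin.mk.injEq] <;> omega
termination_by b - a

lemma lift_ttil (h : IsSpinSystem w r) {a b : Fin n} (hab : a ≠ b) :
    h.lift (ttil n a b) = r a b := by
  rw [ttil]
  split_ifs with hba
  · rw [map_mul, h.lift_zt, h.lift_ttilCore hba a.2, h.swap hab.symm]
  · exact h.lift_ttilCore (lt_of_le_of_ne (not_lt.1 hba) (Fin.val_ne_of_ne hab)) b.2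

end Lift

end IsSpinSystem

section Projection

lemma isSpinSystem_swap (α : Type*) [DecidableEq α] :
    IsSpinSystem (1 : Perm α) (swap : α → α → Perm α) where
  sq_central := one_mul 1
  mul_self _ := swap_mul_self _ _
  swap _ := by rw [swap_comm, one_mul]
  anticommute hab hcd hac had hbc hbd := by
    rw [one_mul]
    exact (Perm.disjoint_swap_swap (by simp [*])).commute.eq
  conj {a b c} _ hac hbc := by
    rw [swap_comm a b, swap_comm b c, swap_mul_swap_mul_swap hbc.symm hac.symm]

variable {n : ℕ}

/-- The projection `S̃ₙ → Sₙ`. -/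
def spinProj (n : ℕ) : SpinSym n →* Perm (Fin n) := (isSpinSystem_swap (Fin n)).lift

@[simp]
lemma spinProj_zt : spinProj n (zt n) = 1 := (isSpinSystem_swap (Fin n)).lift_zt

lemma spinProj_ttil (a b : Fin n) : spinProj n (ttil n a b) = swap a b := by
  rcases eq_or_ne a b with rfl | hab
  · rw [ttil_self, map_one, swap_self, Perm.one_def]
  · exact (isSpinSystem_swap (Fin n)).lift_ttil hab

instance : (Subgroup.zpowers (zt n)).Normal where
  conj_mem g hg k := by
    have hk : Commute k g := by
      obtain ⟨m, rfl⟩ := hg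
      exact (commute_zt k).zpow_right m
    rwa [hk.eq, mul_inv_cancel_right]

lemma mk_zt_eq_one : (zt n : SpinSym n ⧸ Subgroup.zpowers (zt n)) = 1 :=
  (QuotientGroup.eq_one_iff _).2 (Subgroup.mem_zpowers _)

lemma isCoxeterTypeA_mk_ttN : IsCoxeterTypeA
    (fun a => (ttN n a : SpinSym n ⧸ Subgroup.zpowers (zt n))) (n - 1) where
  mul_self {a} ha := by
    rw [ttN_of_lt ha, ← QuotientGroup.mk_mul, tt_mul_tt, mk_zt_eq_one]
  commute {a b} hab hb := by
    rw [ttN_of_lt hb, ttN_of_lt (show a < n - 1 by omega), Commute, SemiconjBy,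
      ← QuotientGroup.mk_mul, tt_mul_tt_of_lt hab, mul_assoc, QuotientGroup.mk_mul, mk_zt_eq_one,
      one_mul, QuotientGroup.mk_mul]
  braid {a} ha := by
    simp only [ttN_of_lt ha, ttN_of_lt (show a < n - 1 by omega), ← QuotientGroup.mk_mul,
      tt_braid]

lemma mk_mem_closure_ttN (g : SpinSym n) :
    (g : SpinSym n ⧸ Subgroup.zpowers (zt n)) ∈
      Subgroup.closure ((fun a => (ttN n a : SpinSym n ⧸ Subgroup.zpowers (zt n))) ''
        Set.Iio (n - 1)) := by
  refine PresentedGroup.generated_by _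
    (Subgroup.comap (QuotientGroup.mk' (Subgroup.zpowers (zt n))) (Subgroup.closure _)) ?_ g
  rintro (i | ⟨⟩)
  · exact Subgroup.subset_closure ⟨i, i.2, congrArg _ (ttN_of_lt i.2)⟩
  · exact (congrArg (· ∈ Subgroup.closure _) mk_zt_eq_one).mpr (one_mem _)

variable [NeZero n]

theorem ker_spinProj : (spinProj n).ker = Subgroup.zpowers (zt n) := by
  have hle : Subgroup.zpowers (zt n) ≤ (spinProj n).ker :=
    Subgroup.zpowers_le.2 (MonoidHom.mem_ker.2 spinProj_zt)
  refine le_antisymm (fun g hg => (QuotientGroup.eq_one_iff g).1 ?_) hle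
  have hn : 0 < n := NeZero.pos n
  refine isCoxeterTypeA_mk_ttN.eq_one_of_map_eq_one (φ := QuotientGroup.lift _ (spinProj n) hle)
    (e := Fin.ofNat n) (fun a ha b hb hab => ?_) (fun a ha => ?_) (mk_mem_closure_ttN g) hg
  · rw [Set.mem_Iic] at ha hb
    rwa [Fin.ext_iff, Fin.val_ofNat, Fin.val_ofNat, Nat.mod_eq_of_lt (by omega),
      Nat.mod_eq_of_lt (by omega)] at hab
  · refine ((isSpinSystem_swap (Fin n)).lift_ttN (by omega)).trans ?_
    congr 1 <;> exact Fin.ext (Nat.mod_eq_of_lt (by omega)).symm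

lemma eq_or_eq_zt_mul_of_spinProj_eq {g h : SpinSym n} (hgh : spinProj n g = spinProj n h) :
    g = h ∨ g = zt n * h := by
  have hmem : g * h⁻¹ ∈ Subgroup.zpowers (zt n) := by
    rw [← ker_spinProj, MonoidHom.mem_ker, map_mul, map_inv, hgh, mul_inv_cancel]
  simpa only [mul_inv_eq_iff_eq_mul, one_mul] using eq_one_or_eq_zt_of_mem_zpowers hmem

end Projection

section Clifford

open QuadraticMap CliffordAlgebra

/-- The form `v ↦ -½ ∑ vᵢ²` on `ℚ^α`, scaled so that the roots `e_a - e_b` have value `-1`. -/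
def spinForm (α : Type*) [Fintype α] : QuadraticForm ℚ (α → ℚ) :=
  weightedSumSquares ℚ fun _ => (-1 / 2 : ℚ)

variable {α : Type*} [Fintype α]

lemma polar_spinForm (u v : α → ℚ) : polar (spinForm α) u v = -(u ⬝ᵥ v) := by
  simp only [polar, spinForm, weightedSumSquares_apply, dotProduct, Pi.add_apply, smul_eq_mul,
    ← Finset.sum_sub_distrib, ← Finset.sum_neg_distrib]
  exact Finset.sum_congr rfl fun i _ => by ring

lemma spinForm_apply (v : α → ℚ) : spinForm α v = -(v ⬝ᵥ v) / 2 := by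
  rw [← polar_spinForm, polar_self, nsmul_eq_mul, Nat.cast_ofNat,
    mul_div_cancel_left₀ _ two_ne_zero]

variable [DecidableEq α]

/-- The root `e_a - e_b` of the root system of type `A`. -/
def root (a b : α) : α → ℚ := Pi.single a 1 - Pi.single b 1

lemma spinForm_root {a b : α} (hab : a ≠ b) : spinForm α (root a b) = -1 := by
  norm_num [spinForm_apply, root, Pi.single_apply, hab, hab.symm]

lemma polar_spinForm_root_adjacent {a b c : α} (hab : a ≠ b) (hac : a ≠ c) (hbc : b ≠ c) :
    polar (spinForm α) (root a b) (root b c) = 1 := by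
  simp only [polar_spinForm, root, sub_dotProduct, dotProduct_sub, single_dotProduct]
  simp [hab, hac, hbc]

lemma isOrtho_spinForm_root {a b c d : α} (hac : a ≠ c) (had : a ≠ d) (hbc : b ≠ c)
    (hbd : b ≠ d) : (spinForm α).IsOrtho (root a b) (root c d) := by
  rw [← isOrtho_polarBilin, polarBilin_apply_apply, polar_spinForm]
  simp [root, hac.symm, had.symm, hbc.symm, hbd.symm]

lemma isSpinSystem_ι_root : IsSpinSystem (-1) fun a b : α => ι (spinForm α) (root a b) where
  sq_central := by simp
  mul_self hab := by rw [ι_sq_scalar, spinForm_root hab, map_neg, map_one]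
  swap {a b} _ := by rw [neg_one_mul, ← map_neg, root, root, neg_sub]
  anticommute _ _ hac had hbc hbd := by
    rw [neg_one_mul, neg_mul]
    exact ι_mul_ι_comm_of_isOrtho (isOrtho_spinForm_root hac had hbc hbd)
  conj hab hac hbc := by
    rw [ι_mul_ι_mul_ι, spinForm_root hab, polar_spinForm_root_adjacent hab hac hbc, one_smul,
      neg_one_smul, sub_neg_eq_add, root, root, root, sub_add_sub_cancel]

/-- The spin representation of `S̃ₙ` in the Clifford algebra. -/
def spinRep (n : ℕ) : SpinSym n →* CliffordAlgebra (spinForm (Fin n)) := isSpinSystem_ι_root.lift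

variable {n : ℕ}

lemma spinRep_zt : spinRep n (zt n) = -1 := isSpinSystem_ι_root.lift_zt

lemma spinRep_ttil {a b : Fin n} (hab : a ≠ b) :
    spinRep n (ttil n a b) = ι (spinForm (Fin n)) (root a b) := isSpinSystem_ι_root.lift_ttil hab

lemma spinRep_zt_ne_one : spinRep n (zt n) ≠ 1 := by
  have : IsAddTorsionFree (CliffordAlgebra (spinForm (Fin n))) := .of_module_rat _
  rw [spinRep_zt, ne_eq, neg_eq_self]
  exact one_ne_zero

lemma zt_ne_one : zt n ≠ 1 := fun h => spinRep_zt_ne_one (by rw [h, map_one])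

variable [NeZero n]

theorem eq_of_spinProj_eq_of_spinRep_eq {g h : SpinSym n} (hproj : spinProj n g = spinProj n h)
    (hrep : spinRep n g = spinRep n h) : g = h := by
  refine (eq_or_eq_zt_mul_of_spinProj_eq hproj).resolve_right ?_
  rintro rfl
  rw [map_mul, ((Group.isUnit h).map _).mul_eq_right] at hrep
  exact spinRep_zt_ne_one hrep

theorem ttil_mul_ttil_of_disjoint {a b c d : Fin n} (hab : a ≠ b) (hcd : c ≠ d) (hac : a ≠ c)
    (had : a ≠ d) (hbc : b ≠ c) (hbd : b ≠ d) :
    ttil n a b * ttil n c d = zt n * ttil n c d * ttil n a b := by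
  apply eq_of_spinProj_eq_of_spinRep_eq
  · simp only [map_mul, spinProj_zt, spinProj_ttil]
    exact (isSpinSystem_swap (Fin n)).anticommute hab hcd hac had hbc hbd
  · simp only [map_mul, spinRep_zt, spinRep_ttil hab, spinRep_ttil hcd]
    exact isSpinSystem_ι_root.anticommute hab hcd hac had hbc hbd

end Clifford

section Cocycle

theorem exists_eq_prod_swap {α : Type*} [LinearOrder α] {l : List α} (hl : l.Pairwise (· < ·))
    (x : Perm α) (hx : ∀ k ∉ l, x k = k) :
    ∃ i : α → α, (∀ k, i k ≤ k) ∧ x = (l.map fun k => swap (i k) k).prod := by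
  induction l using List.reverseRecOn generalizing x with
  | nil => exact ⟨id, fun _ => le_rfl, Equiv.ext fun k => hx k List.not_mem_nil⟩
  | append_singleton l m ih =>
    obtain ⟨hl, -, hlm⟩ := List.pairwise_append.1 hl
    have lt_of_mem {k : α} (hk : k ∈ l) : k < m := hlm k hk m (List.mem_singleton_self m)
    have hm : m ∉ l := fun h => lt_irrefl m (lt_of_mem h)
    have hxm : x (x⁻¹ m) = m := x.apply_symm_apply m
    have hle : x⁻¹ m ≤ m := by
      by_contra hlt
      have hfix : x (x⁻¹ m) = x⁻¹ m := hx _ fun hmem => by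
        rcases List.mem_append.1 hmem with hmem | hmem
        · exact hlt (lt_of_mem hmem).le
        · exact hlt (List.mem_singleton.1 hmem).le
      exact hlt (hfix.symm.trans hxm).le
    obtain ⟨i, hi, hprod⟩ := ih hl (x * swap (x⁻¹ m) m) fun k hk => by
      rw [Perm.mul_apply]
      rcases eq_or_ne k m with rfl | hkm
      · rw [swap_apply_right, hxm]
      have hxk : x k = k := hx k (by simp [hk, hkm])
      rw [swap_apply_of_ne_of_ne _ hkm, hxk]
      rintro rfl
      exact hkm (hxk.symm.trans hxm)
    refine ⟨Function.update i m (x⁻¹ m), fun k => ?_, ?_⟩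
    · rcases eq_or_ne k m with rfl | hkm
      · rwa [Function.update_self]
      · rw [Function.update_of_ne hkm]
        exact hi k
    · have hmap : (l.map fun k => swap (Function.update i m (x⁻¹ m) k) k) =
          l.map fun k => swap (i k) k := List.map_congr_left fun k hk => by
        rw [Function.update_of_ne (ne_of_mem_of_not_mem hk hm)]
      rw [List.map_append, List.prod_append, hmap, ← hprod, List.map_singleton,
        List.prod_singleton, Function.update_self, mul_assoc, swap_mul_self, mul_one]

variable {n : ℕ}

lemma exists_isFactorization (x : Perm (Fin n)) : ∃ i, IsFactorization n x i :=
  exists_eq_prod_swap (List.pairwise_lt_finRange n) x fun k hk => absurd (List.mem_finRange k) hk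

lemma spinProj_sec (x : Perm (Fin n)) : spinProj n (sec n x) = x := by
  have h := exists_isFactorization x
  rw [sec, dif_pos h, map_list_prod, List.map_map]
  conv_rhs => rw [h.choose_spec.2]
  simp only [Function.comp_def, spinProj_ttil]

lemma zt_pow_eq_zt_pow_iff (a b : ℕ) : zt n ^ a = zt n ^ b ↔ (a : ZMod 2) = b := by
  have horder : orderOf (zt n) = 2 :=
    orderOf_eq_prime (by rw [pow_two, zt_mul_zt]) zt_ne_one
  rw [pow_eq_pow_iff_modEq, horder, ZMod.natCast_eq_natCast_iff]

variable [NeZero n]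

lemma sec_mul_sec (x y : Perm (Fin n)) :
    sec n x * sec n y = zt n ^ (coc n x y).val * sec n (x * y) := by
  rw [coc]
  split_ifs with h
  · rw [h, ZMod.val_zero, pow_zero, one_mul]
  · rw [ZMod.val_one, pow_one]
    exact (eq_or_eq_zt_mul_of_spinProj_eq (by simp only [map_mul, spinProj_sec])).resolve_left h

theorem coc_add_coc_mul (p q x : Perm (Fin n)) :
    coc n p q + coc n (p * q) x = coc n q x + coc n p (q * x) := by
  have h : zt n ^ ((coc n p q).val + (coc n (p * q) x).val) * sec n (p * q * x) =
      zt n ^ ((coc n q x).val + (coc n p (q * x)).val) * sec n (p * q * x) :=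
    calc _ = sec n p * sec n q * sec n x := by
          rw [sec_mul_sec p q, mul_assoc (zt n ^ _), sec_mul_sec (p * q) x, pow_add,
            mul_assoc (zt n ^ _)]
      _ = sec n p * (sec n q * sec n x) := mul_assoc _ _ _
      _ = _ := by
          rw [sec_mul_sec q x, ((commute_zt _).pow_right _).left_comm, sec_mul_sec p (q * x),
            pow_add, mul_assoc (zt n ^ _), mul_assoc p q x]
  rw [mul_left_inj, zt_pow_eq_zt_pow_iff] at h
  simpa only [Nat.cast_add, ZMod.natCast_zmod_val] using h

theorem coc_square_sum {p q : Perm (Fin n)} (hpq : Commute p q) (x : Perm (Fin n)) :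
    coc n p x + coc n p (q * x) + coc n q x + coc n q (p * x) = coc n p q + coc n q p := by
  have hp := coc_add_coc_mul p q x
  have hq := coc_add_coc_mul q p x
  rw [hpq.eq] at hp
  linear_combination coc n (q * p) x * (CharTwo.two_eq_zero : (2 : ZMod 2) = 0) - hp - hq

theorem sec_swap_mul_sec_swap {a b c d : Fin n} (hab : a ≠ b) (hcd : c ≠ d) (hac : a ≠ c)
    (had : a ≠ d) (hbc : b ≠ c) (hbd : b ≠ d) :
    sec n (swap a b) * sec n (swap c d) = zt n * (sec n (swap c d) * sec n (swap a b)) := by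
  have sec_swap (p q : Fin n) : sec n (swap p q) = ttil n p q ∨
      sec n (swap p q) = zt n * ttil n p q :=
    eq_or_eq_zt_mul_of_spinProj_eq (by rw [spinProj_sec, spinProj_ttil])
  have anticomm := ttil_mul_ttil_of_disjoint hab hcd hac had hbc hbd
  rcases sec_swap a b with h | h <;> rcases sec_swap c d with h' | h' <;>
    simp only [h, h', mul_assoc, (commute_zt _).left_comm, anticomm]

theorem coc_swap_add_coc_swap {a b c d : Fin n} (hab : a ≠ b) (hcd : c ≠ d) (hac : a ≠ c)
    (had : a ≠ d) (hbc : b ≠ c) (hbd : b ≠ d) :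
    coc n (swap a b) (swap c d) + coc n (swap c d) (swap a b) = 1 := by
  have hcomm : Commute (swap a b) (swap c d) := (Perm.disjoint_swap_swap (by simp [*])).commute
  have h := sec_swap_mul_sec_swap hab hcd hac had hbc hbd
  rw [sec_mul_sec, sec_mul_sec, hcomm.eq, ← mul_assoc, ← pow_succ', mul_left_inj,
    zt_pow_eq_zt_pow_iff, Nat.cast_succ, ZMod.natCast_zmod_val, ZMod.natCast_zmod_val] at h
  rw [h, add_right_comm, CharTwo.add_self_eq_zero, zero_add]

end Cocycle

theorem cocycle_square_rule (n : ℕ) (hn : 2 ≤ n) (i j k l : Fin n)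
    (hij : i ≠ j) (hkl : k ≠ l)
    (hik : i ≠ k) (hil : i ≠ l) (hjk : j ≠ k) (hjl : j ≠ l)
    (x : Equiv.Perm (Fin n)) :
    coc n (Equiv.swap i j) x + coc n (Equiv.swap i j) (Equiv.swap k l * x) +
      coc n (Equiv.swap k l) x + coc n (Equiv.swap k l) (Equiv.swap i j * x) = 1 := by
  have : NeZero n := ⟨by omega⟩
  have hcomm : Commute (swap i j) (swap k l) := (Perm.disjoint_swap_swap (by simp [*])).commute
  rw [coc_square_sum hcomm, coc_swap_add_coc_swap hij hkl hik hil hjk hjl]
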